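/- The set S of inaccessible degrees of D is finite, every s ∈ S satisfies s ≤ N + h (as integers), the kernel of D is finite-dimensional, and the height of D equals minus the index of D: h = card(S) − dim ker(D), i.e. h = β(D) − α(D) where α(D) = dim ker(D) and β(D) = card(S) is the codimension of the range of D. -/

import Mathlib

/-!
Above `N` the operator `D` shifts degrees by exactly `h`, so both its kernel and all its degree gaps
come from its restriction to the `N + 1`-dimensional space of polynomials of degree at most `N`,
whose image lies in degrees at most `N + h`. A finite-dimensional space of polynomials realizes as
many degrees as its dimension, so rank-nullity for this restriction leaves
`(N + 1 + h) - (N + 1 - dim ker D)` of the degrees `0, …, N + h` unattained.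
-/

open Polynomial

section NatDegrees

/-- The set of degrees of the nonzero elements of a space of polynomials, used to compute its
dimension. -/
def natDegrees {R : Type*} [Semiring R] (U : Submodule R R[X]) : Set ℕ :=
  {n | ∃ u ∈ U, u ≠ 0 ∧ u.natDegree = n}

theorem linearIndependent_of_injective_degree {R ι : Type*} [Ring R] [IsDomain R] {f : ι → R[X]}
    (hf : ∀ i, f i ≠ 0) (hinj : Function.Injective (degree ∘ f)) : LinearIndependent R f := by
  refine linearIndependent_iff'.mpr fun s g hsum i hi => ?_
  have degree_term {j : ι} (hj : g j ≠ 0) : (g j • f j).degree = (f j).degree :=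
    degree_smul_of_smul_regular _ (IsSMulRegular.of_ne_zero hj)
  have degree_sum := degree_sum_eq_of_disjoint (fun j => g j • f j) s
    fun j ⟨_, hj⟩ k ⟨_, hk⟩ hjk => by
      simpa only [Function.onFun, Function.comp_apply, degree_term (left_ne_zero_of_smul hj),
        degree_term (left_ne_zero_of_smul hk)] using hinj.ne hjk
  rw [hsum, degree_zero, eq_comm, Finset.sup_eq_bot_iff] at degree_sum
  by_contra hgi
  exact hf i (degree_eq_bot.mp (degree_term hgi ▸ degree_sum i hi))

theorem exists_linearIndependent_natDegrees {R : Type*} [Ring R] [IsDomain R]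
    (U : Submodule R R[X]) : ∃ v : natDegrees U → U, LinearIndependent R v := by
  choose f hfU hf0 hfdeg using fun n : natDegrees U => n.2
  refine ⟨fun n => ⟨f n, hfU n⟩, .of_comp U.subtype ?_⟩
  refine linearIndependent_of_injective_degree hf0 fun m n hmn => Subtype.ext ?_
  rw [← hfdeg m, ← hfdeg n]
  exact natDegree_eq_of_degree_eq hmn

theorem injective_pi_lcoeff_natDegrees {R : Type*} [Ring R] (U : Submodule R R[X]) :
    Function.Injective (LinearMap.pi fun n : natDegrees U => (lcoeff R n).comp U.subtype) := by
  refine LinearMap.ker_eq_bot.mp (LinearMap.ker_eq_bot'.mpr fun u hu => ?_)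
  by_contra hu0
  have hu0' : (u : R[X]) ≠ 0 := mt Submodule.coe_eq_zero.mp hu0
  exact hu0' (leadingCoeff_eq_zero.mp (congrFun hu ⟨_, u, u.2, hu0', rfl⟩))

variable {K : Type*} [DivisionRing K] (U : Submodule K K[X])

theorem finite_natDegrees [FiniteDimensional K U] : (natDegrees U).Finite :=
  let ⟨_, hv⟩ := exists_linearIndependent_natDegrees U
  hv.finite

theorem ncard_natDegrees [FiniteDimensional K U] :
    (natDegrees U).ncard = Module.finrank K U := by
  have := (finite_natDegrees U).fintype
  obtain ⟨v, hv⟩ := exists_linearIndependent_natDegrees U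
  rw [← Nat.card_coe_set_eq, Nat.card_eq_fintype_card]
  refine le_antisymm hv.fintype_card_le_finrank ?_
  simpa using LinearMap.finrank_le_finrank_of_injective (injective_pi_lcoeff_natDegrees U)

end NatDegrees

theorem finrank_map_add_finrank_ker_of_le {K V W : Type*} [DivisionRing K] [AddCommGroup V]
    [Module K V] [AddCommGroup W] [Module K W] (f : V →ₗ[K] W) {L : Submodule K V}
    [FiniteDimensional K L] (hL : LinearMap.ker f ≤ L) :
    Module.finrank K (L.map f) + Module.finrank K (LinearMap.ker f) = Module.finrank K L := by
  rw [← (f.domRestrict L).finrank_range_add_finrank_ker, LinearMap.range_domRestrict,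
    LinearMap.ker_domRestrict, (Submodule.comapSubtypeEquivOfLe hL).finrank_eq]

theorem mem_degreeLT_succ_iff_natDegree_le {R : Type*} [Semiring R] {n : ℕ} {q : R[X]} :
    q ∈ degreeLT R (n + 1) ↔ q.natDegree ≤ n := by
  rw [degreeLT_succ_eq_degreeLE, mem_degreeLE, natDegree_le_iff_degree_le]

section Height

variable {R : Type*} [Semiring R] {D : R[X] →ₗ[R] R[X]} {h : ℤ}

/-- The degrees that no nonzero polynomial in the range of `D` has. -/
def inaccessibleDegrees (D : R[X] →ₗ[R] R[X]) : Set ℕ :=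
  {s | ∀ q, D q ≠ 0 → (D q).natDegree ≠ s}

/-- The operator `D` has height at most `h`: it raises degrees by at most `h`, which may be
negative. Arguments with `D q = 0` are left out because `natDegree 0 = 0`. -/
def HeightLE (D : R[X] →ₗ[R] R[X]) (h : ℤ) : Prop :=
  ∀ q, D q ≠ 0 → ((D q).natDegree : ℤ) ≤ q.natDegree + h

theorem heightLE_of_eq_sum_mul_iterate_derivative {s : Finset ℕ} {p : ℕ → R[X]}
    (hD : ∀ q, D q = ∑ i ∈ s, p i * derivative^[i] q)
    (hp : ∀ i ∈ s, p i ≠ 0 → ((p i).natDegree : ℤ) - i ≤ h) : HeightLE D h := by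
  intro q hq
  have hcoeff : (∑ i ∈ s, p i * derivative^[i] q).coeff (D q).natDegree ≠ 0 :=
    hD q ▸ leadingCoeff_ne_zero.mpr hq
  rw [finsetSum_coeff] at hcoeff
  obtain ⟨i, hi, hcoeff_i⟩ := Finset.exists_ne_zero_of_sum_ne_zero hcoeff
  have hpi : p i ≠ 0 := by
    intro h0
    simp [h0] at hcoeff_i
  have hiq : i ≤ q.natDegree := by
    by_contra! hlt
    simp [iterate_derivative_eq_zero hlt] at hcoeff_i
  have hmul := (le_natDegree_of_ne_zero hcoeff_i).trans natDegree_mul_le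
  have hder := natDegree_iterate_derivative q i
  have hheight := hp i hi hpi
  omega

theorem HeightLE.natDegrees_map_degreeLT_subset (hD : HeightLE D h) {n m : ℕ} (hm : n + h ≤ m) :
    natDegrees ((degreeLT R n).map D) ⊆ Set.Iio m := by
  rintro _ ⟨_, ⟨q, hq, rfl⟩, hDq, rfl⟩
  have hq0 : q ≠ 0 := ne_zero_of_map hDq
  have hqn : q.natDegree < n := (natDegree_lt_iff_degree_lt hq0).mpr (mem_degreeLT.mp hq)
  have := hD q hDq
  rw [Set.mem_Iio]
  omega

end Height

namespace HeightLE

variable {R : Type*} [Ring R] [IsDomain R] {D : R[X] →ₗ[R] R[X]} {h : ℤ}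

theorem degree_map_eq_degree_map_X_pow (hD : HeightLE D h) {q : R[X]} (hq : q ≠ 0)
    (hX : D (X ^ q.natDegree) ≠ 0)
    (hXdeg : ((D (X ^ q.natDegree)).natDegree : ℤ) = q.natDegree + h) :
    (D q).degree = (D (X ^ q.natDegree)).degree := by
  have hlead : (q.leadingCoeff • D (X ^ q.natDegree)).degree = (D (X ^ q.natDegree)).degree :=
    degree_smul_of_smul_regular _ (IsSMulRegular.of_ne_zero (leadingCoeff_ne_zero.mpr hq))
  have hrest : (D q.eraseLead).degree < (D (X ^ q.natDegree)).degree := by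
    by_cases hr : D q.eraseLead = 0
    · rwa [hr, degree_zero, bot_lt_iff_ne_bot, degree_ne_bot]
    · have := natDegree_lt_natDegree (ne_zero_of_map hr) (degree_eraseLead_lt hq)
      have := hD _ hr
      exact degree_lt_degree (by omega)
  calc (D q).degree
      = (D q.eraseLead + q.leadingCoeff • D (X ^ q.natDegree)).degree := by
        rw [← map_smul, smul_eq_C_mul, ← map_add, eraseLead_add_C_mul_X_pow]
    _ = (D (X ^ q.natDegree)).degree := by
        rw [degree_add_eq_right_of_degree_lt (hlead ▸ hrest), hlead]

variable (hD : HeightLE D h) {N : ℕ}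
  (hX : ∀ n : ℕ, N < n → D (X ^ n) ≠ 0 ∧ ((D (X ^ n)).natDegree : ℤ) = n + h)

include hD hX

theorem map_ne_zero_and_natDegree_map {q : R[X]} (hq : N < q.natDegree) :
    D q ≠ 0 ∧ ((D q).natDegree : ℤ) = q.natDegree + h := by
  obtain ⟨hX0, hXdeg⟩ := hX _ hq
  have hdeg := hD.degree_map_eq_degree_map_X_pow (ne_zero_of_natDegree_gt hq) hX0 hXdeg
  refine ⟨?_, by rwa [natDegree_eq_of_degree_eq hdeg]⟩
  rwa [← degree_ne_bot, hdeg, degree_ne_bot]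

theorem ker_le_degreeLT : LinearMap.ker D ≤ degreeLT R (N + 1) := by
  intro q hq
  rw [mem_degreeLT_succ_iff_natDegree_le]
  by_contra! hlt
  exact (hD.map_ne_zero_and_natDegree_map hX hlt).1 hq

theorem inaccessibleDegrees_eq_sdiff {M : ℕ} (hM : (M : ℤ) = N + 1 + h) :
    inaccessibleDegrees D = Set.Iio M \ natDegrees ((degreeLT R (N + 1)).map D) := by
  ext s
  constructor
  · refine fun hs => ⟨?_, ?_⟩
    · by_contra hsM
      rw [Set.mem_Iio, not_lt] at hsM
      obtain ⟨n, hn⟩ := Int.eq_ofNat_of_zero_le (show 0 ≤ (s : ℤ) - h by omega)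
      obtain ⟨hX0, hXdeg⟩ := hX n (by omega)
      exact hs _ hX0 (by omega)
    · rintro ⟨_, ⟨q, -, rfl⟩, hDq, hdeg⟩
      exact hs q hDq hdeg
  · rintro ⟨hsM, hs⟩ q hDq hdeg
    refine hs ⟨D q, ⟨q, ?_, rfl⟩, hDq, hdeg⟩
    rw [SetLike.mem_coe, mem_degreeLT_succ_iff_natDegree_le]
    by_contra! hlt
    have := (hD.map_ne_zero_and_natDegree_map hX hlt).2
    rw [Set.mem_Iio] at hsM
    omega

end HeightLE

theorem stmt_14_general {K : Type*} [DivisionRing K] {D : K[X] →ₗ[K] K[X]} {h : ℤ}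
    (hD : HeightLE D h) {N : ℕ}
    (hX : ∀ n : ℕ, N < n → D (X ^ n) ≠ 0 ∧ ((D (X ^ n)).natDegree : ℤ) = n + h) :
    (inaccessibleDegrees D).Finite ∧ (∀ s ∈ inaccessibleDegrees D, (s : ℤ) ≤ N + h) ∧
    FiniteDimensional K (LinearMap.ker D) ∧
    h = ((inaccessibleDegrees D).ncard : ℤ) - (Module.finrank K (LinearMap.ker D) : ℤ) := by
  obtain ⟨M, hM⟩ : ∃ M : ℕ, (M : ℤ) = N + 1 + h :=
    ⟨_, by simpa using (hX (N + 1) N.lt_succ_self).2⟩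
  have hker := hD.ker_le_degreeLT hX
  have hrank := finrank_map_add_finrank_ker_of_le D hker
  rw [← ncard_natDegrees, Module.finrank_eq_card_basis (degreeLT.basis K (N + 1)),
    Fintype.card_fin] at hrank
  have hcard := Set.ncard_sdiff_add_ncard_of_subset
    (hD.natDegrees_map_degreeLT_subset (n := N + 1) (m := M) (by omega)) (Set.finite_Iio M)
  rw [Set.ncard_Iio_nat] at hcard
  rw [hD.inaccessibleDegrees_eq_sdiff hX hM]
  refine ⟨(Set.finite_Iio M).sdiff, fun s hs => ?_, Submodule.finiteDimensional_of_le hker, ?_⟩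
  · have : s < M := hs.1
    omega
  · omega

/-- The set `S` of inaccessible degrees of `D` is finite, every
`s ∈ S` satisfies `s ≤ N + h` (as integers), the kernel of `D` is finite dimensional,
and the height equals minus the index of `D`:
`h = card S - dim ker D` (`h = β(D) - α(D)`). -/
theorem stmt_14 (ν : ℕ) (p : ℕ → Polynomial ℝ) (hp : ∃ i ≤ ν, p i ≠ 0)
    (D : Polynomial ℝ →ₗ[ℝ] Polynomial ℝ)
    (hD : ∀ q, D q = ∑ i ∈ Finset.range (ν + 1), p i * (Polynomial.derivative^[i] q))
    (h : ℤ)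
    (hh : IsGreatest {z : ℤ | ∃ i ≤ ν, p i ≠ 0 ∧ z = ((p i).natDegree : ℤ) - i} h)
    (N : ℕ)
    (hN : ∀ n : ℕ, N < n → D (X ^ n) ≠ 0 ∧ ((D (X ^ n)).natDegree : ℤ) = n + h)
    (S : Set ℕ)
    (hS : S = {s : ℕ | ∀ q : Polynomial ℝ, D q ≠ 0 → (D q).natDegree ≠ s}) :
    S.Finite ∧ (∀ s ∈ S, (s : ℤ) ≤ N + h) ∧
    FiniteDimensional ℝ (LinearMap.ker D) ∧
    h = (S.ncard : ℤ) - (Module.finrank ℝ (LinearMap.ker D) : ℤ) := by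
  subst hS
  exact stmt_14_general (heightLE_of_eq_sum_mul_iterate_derivative hD fun i hi hpi =>
    hh.2 ⟨i, Finset.mem_range_succ_iff.mp hi, hpi, rfl⟩) hN
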